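/- Let X be a finite m-almost quasigroup quandle with m ≤ 3. Then for every n ≥ 1, the torsion subgroup of the rack homology group H_n^R(X) is annihilated by N = m·lcm(|X|, |X|−m). -/

import Mathlib

/-- The `n`-th rack chain group: the free abelian group on `n`-tuples of `X`. -/
abbrev RackChain (X : Type) (n : ℕ) : Type := FreeAbelianGroup (Fin n → X)

/-- The face map `d_i^{(*_0)}` deleting the `i`-th entry (0-indexed). -/
def dZero {X : Type} (n : ℕ) (i : Fin (n + 1)) (x : Fin (n + 1) → X) :
    Fin n → X :=
  fun j => if (j : ℕ) < (i : ℕ) then x j.castSucc else x j.succ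

/-- The face map `d_i^{(*)}`: entries before position `i` are acted on by `x i`
and the `i`-th entry is deleted (0-indexed). -/
def dStar {X : Type} (op : X → X → X) (n : ℕ) (i : Fin (n + 1))
    (x : Fin (n + 1) → X) : Fin n → X :=
  fun j => if (j : ℕ) < (i : ℕ) then op (x j.castSucc) (x i) else x j.succ

/-- The rack boundary `∂_{n+1} : C_{n+1}^R(X) → C_n^R(X)`,
`∂(x) = Σ_{i=1}^{n+1} (-1)^i (d_i^{(*_0)} x - d_i^{(*)} x)` (with `i` 1-based). -/
def rackBoundary {X : Type} (op : X → X → X) (n : ℕ) :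
    RackChain X (n + 1) →+ RackChain X n :=
  FreeAbelianGroup.lift fun x =>
    ∑ i : Fin (n + 1), ((-1 : ℤ) ^ ((i : ℕ) + 1)) •
      (FreeAbelianGroup.of (dZero n i x) - FreeAbelianGroup.of (dStar op n i x))

/-- The group of rack `(n+1)`-cycles. -/
def rackCycles {X : Type} (op : X → X → X) (n : ℕ) :
    AddSubgroup (RackChain X (n + 1)) :=
  (rackBoundary op n).ker

/-- The group of rack `(n+1)`-boundaries, viewed inside the cycles. -/
def rackBoundaries {X : Type} (op : X → X → X) (n : ℕ) :
    AddSubgroup (rackCycles op n) :=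
  ((rackBoundary op (n + 1)).range).addSubgroupOf (rackCycles op n)

/-- The `(n+1)`-st rack homology group `H_{n+1}^R(X)` (so `n = 0` gives `H_1`). -/
def rackHomology {X : Type} (op : X → X → X) (n : ℕ) : Type :=
  rackCycles (X := X) op n ⧸ rackBoundaries op n

instance {X : Type} (op : X → X → X) (n : ℕ) :
    AddCommGroup (rackHomology op n) :=
  QuotientAddGroup.Quotient.addCommGroup _

/-!
The rack boundary is the difference of two simplicial boundaries, so a face contributes nothing when
acting leaves the deleted tuple unchanged. Write `S_p` for the chain map summing over all ways to
overwrite the first `p` entries of a tuple by one common element `y`. A kernel `K` which is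
invariant under right translations and inverts the Laplacian `f ↦ ∑ y, (f · - f (· * y))` up to
scalars `α` and `β` (a Green kernel) yields, for `p ∈ {k, k + 1}`, a homotopy between `α • E_k` and
`β • S_p`, where `E_k` overwrites the first `k` entries by the `k`-th one. Hence
`β • S_k ≃ β • S_{k+1}`; as `S_0` is multiplication by `|X|` and the top `S_p` factors through the
augmentation, `β * |X|` annihilates every homology class of augmentation zero, in particular every
torsion class.

When the stabilizers of an `m`-almost quasigroup quandle partition it, `|X| • δ_a - 1_{S_a}` is a
Green kernel with `β = |X| - m`. For `m ≤ 3` they do: double counting shows that each right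
translation has exactly `m` fixed points. If `u * b = u` but `b * u ≠ b`, the fixed points of
`· * b` are `b`, `u` and `v = b * u`, and evaluating `(b * u) * v` in two ways gives `u = v`; a
failure of transitivity of `a * b = a` puts four elements into one stabilizer.
-/

open Finset

section Quandle

variable {X : Type*} {op : X → X → X} {m : ℕ}

/-- `op` is a quandle operation. Right translations are the automorphisms, as opposed to Mathlib's
`Quandle`, whose action is from the left. -/
structure IsQuandle (op : X → X → X) : Prop where
  idem (a : X) : op a a = a
  bijective (b : X) : Function.Bijective fun x => op x b
  distrib (a b c : X) : op (op a b) c = op (op a c) (op b c)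

theorem IsQuandle.op_left_inj (hQ : IsQuandle op) {a b c : X} : op a c = op b c ↔ a = b :=
  (hQ.bijective c).injective.eq_iff

variable [Fintype X] [DecidableEq X]

/-- The stabilizer `S_a = {x | a * x = a}`. -/
def rackStabilizer (op : X → X → X) (a : X) : Finset X := {x | op a x = a}

/-- The fixed points of the right translation by `b`, dual to the stabilizer. -/
def rackFixedPoints (op : X → X → X) (b : X) : Finset X := {x | op x b = x}

@[simp]
theorem mem_rackStabilizer {a x : X} : x ∈ rackStabilizer op a ↔ op a x = a := by
  simp [rackStabilizer]

@[simp]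
theorem mem_rackFixedPoints {b x : X} : x ∈ rackFixedPoints op b ↔ op x b = x := by
  simp [rackFixedPoints]

/-- The conditions that make a quandle an `m`-almost quasigroup quandle. -/
structure IsAlmostQuasigroup (op : X → X → X) (m : ℕ) : Prop where
  card_stabilizer (a : X) : #(rackStabilizer op a) = m
  existsUnique_op_eq (a b : X) : op a b ≠ a → ∃! x, op a x = b

theorem IsAlmostQuasigroup.exists_op_eq (hA : IsAlmostQuasigroup op m) {a b : X}
    (hab : op a b ≠ a) : ∃ x, op a x = b :=
  (hA.existsUnique_op_eq a b hab).exists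

theorem sum_card_rackFixedPoints (op : X → X → X) :
    ∑ b, #(rackFixedPoints op b) = ∑ a, #(rackStabilizer op a) := by
  simp only [rackFixedPoints, rackStabilizer, card_filter]
  exact sum_comm

theorem IsQuandle.card_rackFixedPoints_op (hQ : IsQuandle op) (b c : X) :
    #(rackFixedPoints op (op b c)) = #(rackFixedPoints op b) :=
  (card_bijective _ (hQ.bijective c) fun x => by
    simp only [mem_rackFixedPoints, ← hQ.distrib, hQ.op_left_inj]).symm

section LeftTranslation

variable (hQ : IsQuandle op) (hA : IsAlmostQuasigroup op m)
include hQ hA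

theorem image_op_compl_rackStabilizer (a : X) :
    (rackStabilizer op a)ᶜ.image (op a) = (rackStabilizer op a)ᶜ := by
  refine (eq_of_subset_of_card_le (fun b hb => ?_) card_image_le).symm
  obtain ⟨x, rfl⟩ := hA.exists_op_eq (a := a) (b := b) (by simpa using hb)
  refine mem_image_of_mem _ (mem_compl.mpr fun hx => ?_)
  simp [mem_rackStabilizer.mp hx, hQ.idem] at hb

theorem op_op_ne_self {a x : X} (hx : op a x ≠ a) : op a (op a x) ≠ a := by
  have := image_op_compl_rackStabilizer hQ hA a ▸ mem_image_of_mem (op a) (by simpa using hx)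
  simpa using this

theorem sum_op_add_sum_rackStabilizer {M : Type*} [AddCommMonoid M] (f : X → M) (a : X) :
    ∑ y, f (op a y) + ∑ y ∈ rackStabilizer op a, f y = m • f a + ∑ y, f y := by
  have himage := image_op_compl_rackStabilizer hQ hA a
  have hcompl : ∑ y ∈ (rackStabilizer op a)ᶜ, f (op a y) = ∑ y ∈ (rackStabilizer op a)ᶜ, f y := by
    rw [← sum_image (injOn_of_card_image_eq (congrArg card himage)), himage]
  have hstab : ∑ y ∈ rackStabilizer op a, f (op a y) = m • f a := by
    rw [sum_congr rfl fun y hy => by rw [mem_rackStabilizer.mp hy], sum_const, hA.card_stabilizer]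
  rw [← sum_add_sum_compl (rackStabilizer op a) fun y => f (op a y), hcompl, hstab,
    ← sum_add_sum_compl (rackStabilizer op a) f]
  abel

theorem op_eq_self_of_card_rackFixedPoints_ne {a c : X}
    (h : #(rackFixedPoints op a) ≠ #(rackFixedPoints op c)) : op a c = a := by
  by_contra hac
  obtain ⟨x, rfl⟩ := hA.exists_op_eq hac
  exact h (hQ.card_rackFixedPoints_op a x).symm

theorem add_two_le_card_of_lt_card (hm : m < Fintype.card X) :
    m + 2 ≤ Fintype.card X := by
  obtain ⟨a⟩ := Fintype.card_pos_iff.mp (Nat.zero_lt_of_lt hm)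
  obtain ⟨x, hx⟩ : ∃ x, x ∉ rackStabilizer op a := by
    by_contra! h
    rw [← hA.card_stabilizer a, eq_univ_of_forall h, card_univ] at hm
    exact hm.false
  have hax : op a x ≠ a := by simpa using hx
  have hne : x ≠ op a x := fun h => hax <| by
    have : a = x := hQ.op_left_inj.mp (h.symm.trans (hQ.idem x).symm)
    rw [← this, hQ.idem]
  calc
    m + 2 = #(rackStabilizer op a) + #{x, op a x} := by rw [hA.card_stabilizer, card_pair hne]
    _ = #(rackStabilizer op a ∪ {x, op a x}) := by
      refine (card_union_of_disjoint ?_).symm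
      simp [hax, op_op_ne_self hQ hA hax]
    _ ≤ Fintype.card X := card_le_univ _

theorem card_rackFixedPoints_eq_card_rackFixedPoints (hm : 2 * m ≤ Fintype.card X + 1) (a b : X) :
    #(rackFixedPoints op a) = #(rackFixedPoints op b) := by
  by_contra hab
  set A : Finset X := {x | #(rackFixedPoints op x) = #(rackFixedPoints op a)} with hA_def
  have hsub_a : insert a Aᶜ ⊆ rackStabilizer op a := by
    refine insert_subset (by simp [hQ.idem]) fun t ht => ?_
    exact mem_rackStabilizer.mpr <| op_eq_self_of_card_rackFixedPoints_ne hQ hA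
      (Ne.symm (by simpa [hA_def] using ht))
  have hsub_b : insert b A ⊆ rackStabilizer op b := by
    refine insert_subset (by simp [hQ.idem]) fun t ht => ?_
    have ht : #(rackFixedPoints op t) = #(rackFixedPoints op a) := by simpa [hA_def] using ht
    exact mem_rackStabilizer.mpr <| op_eq_self_of_card_rackFixedPoints_ne hQ hA
      (ht ▸ Ne.symm hab)
  have hcard_a := card_le_card hsub_a
  have hcard_b := card_le_card hsub_b
  rw [card_insert_of_notMem (by simp [hA_def]), hA.card_stabilizer] at hcard_a
  rw [card_insert_of_notMem (by simpa [hA_def] using Ne.symm hab), hA.card_stabilizer] at hcard_b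
  have := card_add_card_compl A
  omega

theorem card_rackFixedPoints (hm : 2 * m ≤ Fintype.card X + 1) (b : X) :
    #(rackFixedPoints op b) = m := by
  have hsum := sum_card_rackFixedPoints op
  simp only [hA.card_stabilizer, card_rackFixedPoints_eq_card_rackFixedPoints hQ hA hm _ b,
    sum_const, card_univ, smul_eq_mul] at hsum
  exact Nat.eq_of_mul_eq_mul_left (Fintype.card_pos_iff.mpr ⟨b⟩) hsum

theorem op_eq_self_symm_of_card_rackFixedPoints_le_three {u b : X}
    (hb : #(rackFixedPoints op b) ≤ 3) (hub : op u b = u) : op b u = b := by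
  by_contra hbu
  obtain ⟨v, hv⟩ : ∃ v, op b u = v := ⟨_, rfl⟩
  have hvb : op v b = v := by rw [← hv, hQ.distrib, hQ.idem, hub]
  have hbv_ne : op b v ≠ b := hv ▸ op_op_ne_self hQ hA hbu
  have hbu_ne : b ≠ u := by rintro rfl; exact hbu (hQ.idem b)
  have hbv : b ≠ v := fun h => hbu (hv.trans h.symm)
  have huv : u ≠ v := fun h =>
    hbu_ne (hQ.op_left_inj.mp (hv.trans (h.symm.trans (hQ.idem u).symm)))
  have hfix : ({b, u, v} : Finset X) = rackFixedPoints op b := by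
    refine eq_of_subset_of_card_le ?_ (by rwa [card_eq_three.mpr ⟨b, u, v, hbu_ne, hbv, huv, rfl⟩])
    simp [insert_subset_iff, hQ.idem, hub, hvb]
  have hcases {t : X} (ht : op t b = t) : t = b ∨ t = u ∨ t = v := by
    simpa [← hfix] using mem_rackFixedPoints.mpr ht
  have hne_v {t : X} (ht : t ≠ v) : op t v ≠ v := fun h =>
    ht (hQ.op_left_inj.mp (h.trans (hQ.idem v).symm))
  have hbv_eq : op b v = u := by
    have := hcases (t := op b v) (by rw [hQ.distrib, hQ.idem, hvb])
    tauto
  have huv_eq : op u v = b := by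
    have hne : op u v ≠ u := fun h => hbu_ne (hQ.op_left_inj.mp (hbv_eq.trans h.symm))
    have := hcases (t := op u v) (by rw [hQ.distrib, hub, hvb])
    tauto
  refine huv ?_
  calc
    u = op (op b v) (op u v) := by rw [hbv_eq, huv_eq, hub]
    _ = op (op b u) v := (hQ.distrib b u v).symm
    _ = v := by rw [hv, hQ.idem]

end LeftTranslation

theorem op_eq_self_of_symm_of_card_rackStabilizer_le_three (hQ : IsQuandle op)
    (hsymm : ∀ {a b : X}, op a b = a → op b a = b) {a b c : X}
    (ha : #(rackStabilizer op a) ≤ 3) (hab : op a b = a) (hac : op a c = a) : op b c = b := by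
  by_contra hbc
  have hba := hsymm hab
  have hbca : op a (op b c) = a := hsymm (by rw [hQ.distrib, hba, hsymm hac])
  have hb_ne_a : b ≠ a := by rintro rfl; exact hbc hac
  have hc_ne_a : c ≠ a := by rintro rfl; exact hbc hba
  have hb_ne_c : b ≠ c := by rintro rfl; exact hbc (hQ.idem b)
  have hbc_ne_a : op b c ≠ a := fun h => hb_ne_a (hQ.op_left_inj.mp (h.trans hac.symm))
  have hbc_ne_c : op b c ≠ c := fun h => hb_ne_c (hQ.op_left_inj.mp (h.trans (hQ.idem c).symm))
  have hsub : ({a, b, c, op b c} : Finset X) ⊆ rackStabilizer op a := by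
    simp [insert_subset_iff, hQ.idem, hab, hac, hbca]
  have hcard : #({a, b, c, op b c} : Finset X) = 4 := by
    simp [card_insert_of_notMem, hb_ne_a.symm, hc_ne_a.symm, hb_ne_c, hbc_ne_a.symm, Ne.symm hbc,
      hbc_ne_c.symm]
  have := card_le_card hsub
  omega

theorem op_eq_self_of_le_three (hQ : IsQuandle op) (hA : IsAlmostQuasigroup op m) (hm : m ≤ 3)
    {a b c : X} (hab : op a b = a) (hac : op a c = a) : op b c = b := by
  have hle : m ≤ Fintype.card X := hA.card_stabilizer a ▸ card_le_univ _
  rcases hle.eq_or_lt with heq | hlt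
  · have huniv : rackStabilizer op b = univ := by
      rw [← card_eq_iff_eq_univ, hA.card_stabilizer, heq]
    exact mem_rackStabilizer.mp (huniv ▸ mem_univ c)
  · have hcard := add_two_le_card_of_lt_card hQ hA hlt
    refine op_eq_self_of_symm_of_card_rackStabilizer_le_three hQ (fun {_ y} h => ?_)
      ((hA.card_stabilizer a).trans_le hm) hab hac
    refine op_eq_self_symm_of_card_rackFixedPoints_le_three hQ hA ?_ h
    exact (card_rackFixedPoints hQ hA (by omega) y).trans_le hm

theorem rackStabilizer_eq_of_op_eq_self (hA : IsAlmostQuasigroup op m)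
    (hpart : ∀ a b c : X, op a b = a → op a c = a → op b c = b) {a b : X} (hab : op a b = a) :
    rackStabilizer op b = rackStabilizer op a := by
  refine (eq_of_subset_of_card_le (fun c hc => ?_) ?_).symm
  · exact mem_rackStabilizer.mpr (hpart a b c hab (mem_rackStabilizer.mp hc))
  · rw [hA.card_stabilizer, hA.card_stabilizer]

/-- An integral kernel on a quandle, invariant under right translations, that inverts the Laplacian
`f ↦ (a ↦ ∑ y, (f a - f (a * y)))` up to the scalar `α` and `β` times the sum of all values. -/
structure IsGreenKernel (op : X → X → X) (K : X → X → ℤ) (α β : ℤ) : Prop where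
  invariant (a z b : X) : K (op a b) (op z b) = K a z
  sum_smul_laplacian {M : Type} [AddCommGroup M] (f : X → M) (a : X) :
    ∑ z, K a z • ∑ y, (f z - f (op z y)) = α • f a - β • ∑ y, f y

/-- The kernel `|X| • δ_a - 1_{S_a}`, a Green kernel as soon as the stabilizers partition `X`. -/
def rackStabilizerKernel (op : X → X → X) (a z : X) : ℤ :=
  (if z = a then (Fintype.card X : ℤ) else 0) - if z ∈ rackStabilizer op a then 1 else 0

theorem sum_rackStabilizerKernel_smul {M : Type*} [AddCommGroup M] (f : X → M) (a : X) :
    ∑ z, rackStabilizerKernel op a z • f z =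
      (Fintype.card X : ℤ) • f a - ∑ z ∈ rackStabilizer op a, f z := by
  simp [rackStabilizerKernel, sub_smul, sum_filter, rackStabilizer]

theorem sum_sub_op {M : Type*} [AddCommGroup M] (hQ : IsQuandle op) (hA : IsAlmostQuasigroup op m)
    (f : X → M) (z : X) :
    ∑ y, (f z - f (op z y)) =
      ((Fintype.card X : ℤ) - m) • f z - ∑ y, f y + ∑ y ∈ rackStabilizer op z, f y := by
  have hsum := sum_op_add_sum_rackStabilizer hQ hA f z
  rw [sum_sub_distrib, eq_sub_of_add_eq hsum, sum_const, card_univ, ← natCast_zsmul,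
    ← natCast_zsmul]
  module

theorem isGreenKernel_rackStabilizerKernel (hQ : IsQuandle op) (hA : IsAlmostQuasigroup op m)
    (hpart : ∀ a b c : X, op a b = a → op a c = a → op b c = b) :
    IsGreenKernel op (rackStabilizerKernel op) (Fintype.card X * (Fintype.card X - m))
      (Fintype.card X - m) where
  invariant a z b := by
    simp only [rackStabilizerKernel, mem_rackStabilizer, ← hQ.distrib, hQ.op_left_inj]
  sum_smul_laplacian f a := by
    have hstab : ∑ z ∈ rackStabilizer op a, ∑ y ∈ rackStabilizer op z, f y =
        (m : ℤ) • ∑ y ∈ rackStabilizer op a, f y := by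
      rw [sum_congr rfl fun z hz => by
        rw [rackStabilizer_eq_of_op_eq_self hA hpart (mem_rackStabilizer.mp hz)],
        sum_const, hA.card_stabilizer, natCast_zsmul]
    rw [sum_rackStabilizerKernel_smul]
    simp only [sum_sub_op hQ hA, sum_add_distrib, sum_sub_distrib, hstab, ← smul_sum, sum_const,
      hA.card_stabilizer, ← natCast_zsmul]
    module

end Quandle

section Faces

variable {X : Type} {op : X → X → X} {n : ℕ}

theorem dZero_eq_dStar (i : Fin (n + 1)) (x : Fin (n + 1) → X) :
    dZero n i x = dStar (fun a _ => a) n i x := rfl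

/-- The tuple `x` with its first `p` entries overwritten by `z`. -/
def overwrite (p : ℕ) (z : X) (x : Fin n → X) : Fin n → X :=
  fun i => if (i : ℕ) < p then z else x i

/-- The tuple `(z, …, z, y, x_p, x_{p+1}, …)`: the first `p` entries of `x` are overwritten by `z`
and `y` is inserted in position `p`. -/
def overwriteInsert (p : ℕ) (z y : X) (x : Fin n → X) : Fin (n + 1) → X :=
  fun i => if h : p < i then x ⟨i - 1, by omega⟩ else if (i : ℕ) = p then y else z

theorem overwrite_zero (z : X) (x : Fin n → X) : overwrite 0 z x = x := by
  funext i
  simp [overwrite]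

theorem overwrite_of_le {p : ℕ} (hp : n ≤ p) (z : X) (x : Fin n → X) :
    overwrite p z x = fun _ => z := by
  funext i
  exact if_pos (i.isLt.trans_le hp)

theorem overwrite_succ_apply_self (k : Fin n) (x : Fin n → X) :
    overwrite (k + 1) (x k) x = overwrite k (x k) x := by
  funext i
  rcases eq_or_ne i k with rfl | hik
  · simp [overwrite]
  · have : (i : ℕ) < k + 1 ↔ (i : ℕ) < k := by have := Fin.val_ne_of_ne hik; omega
    simp only [overwrite, this]

theorem dStar_overwriteInsert_of_lt (hidem : ∀ a, op a a = a) {p : ℕ} {i : Fin (n + 1)}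
    (hi : (i : ℕ) < p) (z y : X) (x : Fin n → X) :
    dStar op n i (overwriteInsert p z y x) = dZero n i (overwriteInsert p z y x) := by
  funext t
  simp only [dStar, dZero, overwriteInsert, Fin.val_castSucc, Fin.val_succ]
  split_ifs <;> first | omega | simp only [hidem]

theorem dStar_overwriteInsert_self (op : X → X → X) (p : Fin (n + 1)) (z y : X) (x : Fin n → X) :
    dStar op n p (overwriteInsert p z y x) = overwrite p (op z y) x := by
  funext t
  simp only [dStar, overwriteInsert, overwrite, Fin.val_castSucc, Fin.val_succ]
  split_ifs <;> first | omega | simp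

theorem dStar_succ_overwriteInsert (op : X → X → X) {p : ℕ} {j : Fin (n + 1)} (hj : p ≤ j)
    (z y : X) (x : Fin (n + 1) → X) :
    dStar op (n + 1) j.succ (overwriteInsert p z y x) =
      overwriteInsert p (op z (x j)) (op y (x j)) (dStar op n j x) := by
  funext t
  simp only [dStar, overwriteInsert, Fin.val_castSucc, Fin.val_succ]
  split_ifs <;> first
    | omega
    | rfl
    | (congr 1; apply Fin.ext; simp only [Fin.val_succ]; omega)

theorem overwriteInsert_dStar_of_le (op : X → X → X) {p : ℕ} {j : Fin (n + 1)} (hj : j ≤ p)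
    (z y : X) (x : Fin (n + 1) → X) :
    overwriteInsert p z y (dStar op n j x) = overwriteInsert p z y (dZero n j x) := by
  funext t
  simp only [dStar, dZero, overwriteInsert]
  split_ifs <;> first | omega | rfl

/-- The function `K (x_k)`, or zero if the tuple `x` has no `k`-th entry. -/
def entryKernel (K : X → X → ℤ) (k : ℕ) (x : Fin n → X) (z : X) : ℤ :=
  if h : k < n then K (x ⟨k, h⟩) z else 0

theorem entryKernel_apply (K : X → X → ℤ) (k : Fin n) (x : Fin n → X) (z : X) :
    entryKernel K k x z = K (x k) z := by
  simp [entryKernel]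

theorem entryKernel_dStar_of_lt {K : X → X → ℤ} (hK : ∀ a z b, K (op a b) (op z b) = K a z)
    {k : ℕ} {j : Fin (n + 1)} (hkj : k < j) (x : Fin (n + 1) → X) (z : X) :
    entryKernel K k (dStar op n j x) (op z (x j)) = entryKernel K k x z := by
  simp only [entryKernel, dif_pos (show k < n by omega), dif_pos (show k < n + 1 by omega), dStar,
    if_pos hkj]
  exact hK _ z _

theorem entryKernel_dStar_of_le (op : X → X → X) (K : X → X → ℤ) {k : ℕ} {j : Fin (n + 1)}
    (hjk : j ≤ k) (x : Fin (n + 1) → X) :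
    entryKernel K k (dStar op n j x) = entryKernel K k (dZero n j x) := by
  funext z
  simp only [entryKernel, dStar, dZero, if_neg hjk.not_gt]

end Faces

section Homotopy

variable {X : Type} {op : X → X → X} {n : ℕ}

/-- The linear extension of the face map `dStar`. -/
def starFace (op : X → X → X) (i : Fin (n + 1)) : RackChain X (n + 1) →+ RackChain X n :=
  FreeAbelianGroup.map (dStar op n i)

theorem rackBoundary_apply (op : X → X → X) (c : RackChain X (n + 1)) :
    rackBoundary op n c = ∑ i : Fin (n + 1), (-1 : ℤ) ^ ((i : ℕ) + 1) •
      (starFace (fun a _ => a) i c - starFace op i c) := by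
  suffices rackBoundary op n = ∑ i : Fin (n + 1), (-1 : ℤ) ^ ((i : ℕ) + 1) •
      (starFace (fun a _ => a) i - starFace op i) by
    simp [this]
  ext x
  simp [rackBoundary, starFace, dZero_eq_dStar]

variable [Fintype X]

theorem sum_smul_sum_reindex {M : Type*} [AddCommGroup M] {e : X → X} (he : e.Bijective)
    {w w' : X → ℤ} (hw : ∀ z, w' (e z) = w z) (F : X → X → M) :
    ∑ z, w z • ∑ y, F (e z) (e y) = ∑ z, w' z • ∑ y, F z y := by
  rw [← he.sum_comp fun z => w' z • ∑ y, F z y]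
  refine sum_congr rfl fun z _ => ?_
  rw [hw, he.sum_comp fun y => F (e z) y]

/-- The degree one map sending `x` to `∑ K(x_k, z) (z, …, z, y, x_p, x_{p+1}, …)`, summed over all
`z` and `y`, which is the homotopy attached to the kernel `K`. -/
def rackHomotopy (K : X → X → ℤ) (p k n : ℕ) : RackChain X n →+ RackChain X (n + 1) :=
  FreeAbelianGroup.lift fun x =>
    ∑ z, entryKernel K k x z • ∑ y, FreeAbelianGroup.of (overwriteInsert p z y x)

theorem rackHomotopy_of (K : X → X → ℤ) (p k : ℕ) (x : Fin n → X) :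
    rackHomotopy K p k n (.of x) =
      ∑ z, entryKernel K k x z • ∑ y, FreeAbelianGroup.of (overwriteInsert p z y x) :=
  FreeAbelianGroup.lift_apply_of _ _

theorem starFace_rackHomotopy_of (op : X → X → X) (K : X → X → ℤ) (p k : ℕ) (i : Fin (n + 1))
    (x : Fin n → X) :
    starFace op i (rackHomotopy K p k n (.of x)) =
      ∑ z, entryKernel K k x z •
        ∑ y, FreeAbelianGroup.of (dStar op n i (overwriteInsert p z y x)) := by
  simp [rackHomotopy_of, starFace]

theorem starFace_rackHomotopy_of_lt (hidem : ∀ a, op a a = a) (K : X → X → ℤ) {p : ℕ} (k : ℕ)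
    {i : Fin (n + 1)} (hi : i < p) (x : Fin n → X) :
    starFace op i (rackHomotopy K p k n (.of x)) =
      starFace (fun a _ => a) i (rackHomotopy K p k n (.of x)) := by
  simp only [starFace_rackHomotopy_of, dStar_overwriteInsert_of_lt hidem hi, dZero_eq_dStar]

theorem starFace_rackHomotopy_self (op : X → X → X) (K : X → X → ℤ) (p : Fin (n + 1)) (k : Fin n)
    (x : Fin n → X) :
    starFace op p (rackHomotopy K p k n (.of x)) =
      ∑ z, K (x k) z • ∑ y, FreeAbelianGroup.of (overwrite p (op z y) x) := by
  simp only [starFace_rackHomotopy_of, dStar_overwriteInsert_self, entryKernel_apply]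

theorem rackHomotopy_starFace_of_le (op : X → X → X) (K : X → X → ℤ) {p k : ℕ} {j : Fin (n + 1)}
    (hjp : j ≤ p) (hjk : j ≤ k) (x : Fin (n + 1) → X) :
    rackHomotopy K p k n (starFace op j (.of x)) =
      rackHomotopy K p k n (starFace (fun a _ => a) j (.of x)) := by
  simp only [starFace, FreeAbelianGroup.map_of_apply, rackHomotopy_of, ← dZero_eq_dStar,
    entryKernel_dStar_of_le op K hjk, overwriteInsert_dStar_of_le op hjp]

theorem starFace_succ_rackHomotopy_of_lt (hop : ∀ b, Function.Bijective fun a => op a b)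
    {K : X → X → ℤ} (hK : ∀ a z b, K (op a b) (op z b) = K a z) {p k : ℕ} {j : Fin (n + 1)}
    (hpj : p ≤ j) (hkj : k < j) (x : Fin (n + 1) → X) :
    starFace op j.succ (rackHomotopy K p k (n + 1) (.of x)) =
      rackHomotopy K p k n (starFace op j (.of x)) := by
  simp only [starFace_rackHomotopy_of, dStar_succ_overwriteInsert op hpj]
  rw [starFace, FreeAbelianGroup.map_of_apply, rackHomotopy_of]
  exact sum_smul_sum_reindex (hop (x j)) (entryKernel_dStar_of_lt hK hkj x)
    fun z y => FreeAbelianGroup.of (overwriteInsert p z y (dStar op n j x))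

theorem starFace_succ_rackHomotopy_self (hQ : IsQuandle op)
    {K : X → X → ℤ} (hK : ∀ a z b, K (op a b) (op z b) = K a z) (j : Fin (n + 1))
    (x : Fin (n + 1) → X) :
    starFace op j.succ (rackHomotopy K j j (n + 1) (.of x)) =
      starFace (fun a _ => a) j.succ (rackHomotopy K j j (n + 1) (.of x)) := by
  simp only [starFace_rackHomotopy_of, dStar_succ_overwriteInsert _ le_rfl, entryKernel_apply,
    overwriteInsert_dStar_of_le _ le_rfl]
  exact sum_smul_sum_reindex (hQ.bijective (x j))
    (fun z => by simpa only [hQ.idem] using hK (x j) z (x j))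
    fun z y => FreeAbelianGroup.of (overwriteInsert j z y (dZero n j x))

theorem rackBoundary_rackHomotopy_add_of (hQ : IsQuandle op) {K : X → X → ℤ}
    (hK : ∀ a z b, K (op a b) (op z b) = K a z) {p : Fin (n + 2)} {k : Fin (n + 1)}
    (hkp : (k : ℕ) ≤ p) (hpk : (p : ℕ) ≤ k + 1) (x : Fin (n + 1) → X) :
    rackBoundary op (n + 1) (rackHomotopy K p k (n + 1) (.of x)) +
        rackHomotopy K p k n (rackBoundary op n (.of x)) =
      (-1 : ℤ) ^ ((p : ℕ) + 1) • ∑ z, K (x k) z • ∑ y,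
        (FreeAbelianGroup.of (overwrite p z x) - FreeAbelianGroup.of (overwrite p (op z y) x)) := by
  rw [rackBoundary_apply, rackBoundary_apply, map_sum, Fin.sum_univ_succAbove _ p, add_assoc,
    ← sum_add_distrib, sum_eq_zero, add_zero]
  · simp only [starFace_rackHomotopy_self, sum_sub_distrib, smul_sub]
  intro j _
  simp only [map_zsmul, map_sub]
  rcases lt_or_ge (j : ℕ) p with hjp | hpj
  · rw [Fin.succAbove_of_castSucc_lt _ _ hjp,
      starFace_rackHomotopy_of_lt (i := j.castSucc) hQ.idem K k hjp,
      rackHomotopy_starFace_of_le op K hjp.le (by omega)]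
    simp only [sub_self, smul_zero, add_zero]
  rw [Fin.succAbove_of_le_castSucc _ _ hpj, Fin.val_succ, pow_succ _ ((j : ℕ) + 1)]
  rcases (hkp.trans hpj).eq_or_lt with hkj | hkj
  · obtain rfl : k = j := Fin.ext hkj
    have hpk : (p : ℕ) = k := le_antisymm hpj hkp
    rw [hpk, starFace_succ_rackHomotopy_self hQ hK,
      rackHomotopy_starFace_of_le op K le_rfl le_rfl]
    simp only [sub_self, smul_zero, add_zero]
  · rw [starFace_succ_rackHomotopy_of_lt hQ.bijective hK hpj hkj,
      starFace_succ_rackHomotopy_of_lt (op := fun a _ => a) (fun _ => Function.bijective_id)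
        (fun _ _ _ => rfl) hpj hkj]
    module

/-- The chain map `S_p`, summing over all ways to overwrite the first `p` entries by one element. -/
def sumOverwrite (p n : ℕ) : RackChain X n →+ RackChain X n :=
  FreeAbelianGroup.lift fun x => ∑ y, FreeAbelianGroup.of (overwrite p y x)

theorem sumOverwrite_of (p : ℕ) (x : Fin n → X) :
    sumOverwrite p n (.of x) = ∑ y, FreeAbelianGroup.of (overwrite p y x) :=
  FreeAbelianGroup.lift_apply_of _ _

theorem sumOverwrite_zero (c : RackChain X n) : sumOverwrite 0 n c = Fintype.card X • c := by
  suffices sumOverwrite (X := X) 0 n = Fintype.card X • AddMonoidHom.id _ by simp [this]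
  ext x
  simp [sumOverwrite_of, overwrite_zero]

section GreenKernel

variable {K : X → X → ℤ} {α β : ℤ} (hQ : IsQuandle op) (hK : IsGreenKernel op K α β)
include hQ hK

theorem IsGreenKernel.boundary_homotopy_add_homotopy_boundary_of {p : Fin (n + 2)} {k : Fin (n + 1)}
    (hkp : (k : ℕ) ≤ p) (hpk : (p : ℕ) ≤ k + 1) (x : Fin (n + 1) → X) :
    rackBoundary op (n + 1) (rackHomotopy K p k (n + 1) (.of x)) +
        rackHomotopy K p k n (rackBoundary op n (.of x)) =
      (-1 : ℤ) ^ ((p : ℕ) + 1) •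
        (α • FreeAbelianGroup.of (overwrite p (x k) x) - β • sumOverwrite p (n + 1) (.of x)) := by
  rw [rackBoundary_rackHomotopy_add_of hQ hK.invariant hkp hpk,
    hK.sum_smul_laplacian fun z => FreeAbelianGroup.of (overwrite p z x), sumOverwrite_of]

theorem IsGreenKernel.boundary_comp_homotopy_add_homotopy_comp_boundary (k : Fin (n + 1)) :
    (rackBoundary op (n + 1)).comp
          (rackHomotopy K (k + 1) k (n + 1) + rackHomotopy K k k (n + 1)) +
        (rackHomotopy K (k + 1) k n + rackHomotopy K k k n).comp (rackBoundary op n) =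
      (-1 : ℤ) ^ ((k : ℕ) + 1) • β • (sumOverwrite (k + 1) (n + 1) - sumOverwrite k (n + 1)) := by
  ext x
  have hsucc := hK.boundary_homotopy_add_homotopy_boundary_of hQ (p := k.succ) (k := k)
    (by simp) (by simp) x
  have hself := hK.boundary_homotopy_add_homotopy_boundary_of hQ (p := k.castSucc) (k := k)
    (by simp) (by simp) x
  rw [Fin.val_succ, overwrite_succ_apply_self, pow_succ _ ((k : ℕ) + 1)] at hsucc
  rw [Fin.val_castSucc] at hself
  simp only [AddMonoidHom.add_apply, AddMonoidHom.comp_apply, AddMonoidHom.smul_apply,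
    AddMonoidHom.sub_apply, map_add]
  rw [add_add_add_comm, hsucc, hself]
  module

theorem IsGreenKernel.smul_sumOverwrite_sub_mem_range {c : RackChain X (n + 1)}
    (hc : rackBoundary op n c = 0) {p : ℕ} (hp : p ≤ n + 1) :
    β • (sumOverwrite p (n + 1) c - sumOverwrite 0 (n + 1) c) ∈
      (rackBoundary op (n + 1)).range := by
  induction p with
  | zero => simp
  | succ p ih =>
    have hhomotopy := DFunLike.congr_fun
      (hK.boundary_comp_homotopy_add_homotopy_comp_boundary hQ ⟨p, hp⟩) c
    simp only [AddMonoidHom.add_apply, AddMonoidHom.comp_apply, hc, map_zero, add_zero]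
      at hhomotopy
    have hstep : β • (sumOverwrite (p + 1) (n + 1) c - sumOverwrite p (n + 1) c) ∈
        (rackBoundary op (n + 1)).range := by
      have := AddMonoidHom.mem_range.mpr ⟨_, hhomotopy⟩
      rcases neg_one_pow_eq_or ℤ (p + 1) with h | h <;> simpa [h] using this
    rw [← sub_add_sub_cancel _ (sumOverwrite p (n + 1) c), smul_add]
    exact add_mem hstep (ih (by omega))

end GreenKernel
end Homotopy

section Torsion

/-- The augmentation, which sums the coefficients of a chain. -/
def augmentation (α : Type*) : FreeAbelianGroup α →+ ℤ := FreeAbelianGroup.lift fun _ => 1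

theorem freeAbelianGroup_lift_const {α M : Type*} [AddCommGroup M] (v : M)
    (c : FreeAbelianGroup α) :
    FreeAbelianGroup.lift (fun _ => v) c = augmentation α c • v := by
  suffices FreeAbelianGroup.lift (fun _ : α => v) =
      (zmultiplesHom M v).comp (augmentation α) by
    simp [this]
  ext
  simp [augmentation]

variable {X : Type} {op : X → X → X} {n : ℕ}

theorem augmentation_rackBoundary (op : X → X → X) (c : RackChain X (n + 1)) :
    augmentation _ (rackBoundary op n c) = 0 := by
  suffices (augmentation _).comp (rackBoundary op n) = 0 from DFunLike.congr_fun this c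
  ext x
  simp [augmentation, rackBoundary]

theorem nsmul_rackHomology_mk_eq_zero_iff (t : ℕ) (c : rackCycles op n) :
    t • (QuotientAddGroup.mk c : rackHomology op n) = 0 ↔
      t • (c : RackChain X (n + 1)) ∈ (rackBoundary op (n + 1)).range :=
  (QuotientAddGroup.eq_zero_iff (t • c)).trans AddSubgroup.mem_addSubgroupOf

theorem augmentation_eq_zero_of_nsmul_mk_eq_zero {c : rackCycles op n} {t : ℕ} (ht : t ≠ 0)
    (h : t • (QuotientAddGroup.mk c : rackHomology op n) = 0) :
    augmentation _ (c : RackChain X (n + 1)) = 0 := by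
  obtain ⟨d, hd⟩ := (nsmul_rackHomology_mk_eq_zero_iff t c).mp h
  have := augmentation_rackBoundary op d
  rw [hd, map_nsmul, smul_eq_zero] at this
  exact this.resolve_left ht

variable [Fintype X]

theorem sumOverwrite_of_augmentation_eq_zero {p : ℕ} (hp : n ≤ p) {c : RackChain X n}
    (hc : augmentation _ c = 0) : sumOverwrite p n c = 0 := by
  simp only [sumOverwrite, overwrite_of_le hp, freeAbelianGroup_lift_const, hc, zero_smul]

theorem IsGreenKernel.smul_card_smul_mem_range {K : X → X → ℤ} {α β : ℤ} (hQ : IsQuandle op)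
    (hK : IsGreenKernel op K α β) {c : RackChain X (n + 1)} (hc : rackBoundary op n c = 0)
    (hcaug : augmentation _ c = 0) :
    β • Fintype.card X • c ∈ (rackBoundary op (n + 1)).range := by
  have h := hK.smul_sumOverwrite_sub_mem_range hQ hc le_rfl
  rw [sumOverwrite_of_augmentation_eq_zero le_rfl hcaug, sumOverwrite_zero, zero_sub, smul_neg]
    at h
  exact neg_mem_iff.mp h

theorem mul_sub_dvd_mul_lcm_sub {N m : ℕ} (hm : m ≤ N) :
    N * (N - m) ∣ m * N.lcm (N - m) := by
  rw [← Nat.gcd_mul_lcm N (N - m)]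
  refine Nat.mul_dvd_mul_right ?_ _
  have := Nat.dvd_sub (N.gcd_dvd_left (N - m)) (N.gcd_dvd_right (N - m))
  rwa [Nat.sub_sub_self hm] at this

theorem card_mul_card_sub_nsmul_rackHomology_eq_zero [DecidableEq X] {m : ℕ} (hQ : IsQuandle op)
    (hA : IsAlmostQuasigroup op m)
    (hpart : ∀ a b c : X, op a b = a → op a c = a → op b c = b) (hm : m ≤ Fintype.card X)
    {h : rackHomology op n} (htors : ∃ k : ℕ, k ≠ 0 ∧ k • h = 0) :
    (Fintype.card X * (Fintype.card X - m)) • h = 0 := by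
  obtain ⟨k, hk, hkh⟩ := htors
  obtain ⟨c, rfl⟩ := QuotientAddGroup.mk_surjective h
  have hmem := (isGreenKernel_rackStabilizerKernel hQ hA hpart).smul_card_smul_mem_range hQ c.2
    (augmentation_eq_zero_of_nsmul_mk_eq_zero hk hkh)
  refine (nsmul_rackHomology_mk_eq_zero_iff _ c).mpr ?_
  rwa [mul_comm, mul_smul, ← natCast_zsmul _ (Fintype.card X - m), Nat.cast_sub hm]

end Torsion

theorem mAQ_le_three_torsion_annihilated_general {X : Type} [Fintype X] [DecidableEq X]
    {op : X → X → X} {m : ℕ} (hQ : IsQuandle op) (hA : IsAlmostQuasigroup op m)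
    (hpart : ∀ a b c : X, op a b = a → op a c = a → op b c = b) (n : ℕ) (h : rackHomology op n)
    (htors : ∃ k : ℕ, k ≠ 0 ∧ k • h = 0) :
    (m * Nat.lcm (Fintype.card X) (Fintype.card X - m)) • h = 0 := by
  rcases isEmpty_or_nonempty X with _ | ⟨⟨a⟩⟩
  · simp
  have hm : m ≤ Fintype.card X := hA.card_stabilizer a ▸ card_le_univ _
  obtain ⟨e, he⟩ := mul_sub_dvd_mul_lcm_sub hm
  rw [he, mul_comm, mul_smul, card_mul_card_sub_nsmul_rackHomology_eq_zero hQ hA hpart hm htors,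
    smul_zero]

/-- For a finite `m`-almost quasigroup quandle `X` with `m ≤ 3`,
the torsion subgroup of every rack homology group `H_n^R(X)` (`n ≥ 1`) is
annihilated by `N = m · lcm(|X|, |X| - m)`. -/
theorem mAQ_le_three_torsion_annihilated
    {X : Type} [Fintype X] [DecidableEq X] (op : X → X → X) (m : ℕ)
    (hm : 1 ≤ m)
    (hidem : ∀ a : X, op a a = a)
    (hbij : ∀ b : X, Function.Bijective fun x => op x b)
    (hdist : ∀ a b c : X, op (op a b) c = op (op a c) (op b c))
    (hstab : ∀ a : X, (Finset.univ.filter fun x => op a x = a).card = m)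
    (hsol : ∀ a b : X, op a b ≠ a → ∃! x : X, op a x = b)
    (hm3 : m ≤ 3) :
    ∀ n : ℕ, ∀ h : rackHomology op n,
      (∃ k : ℕ, k ≠ 0 ∧ k • h = 0) →
        (m * Nat.lcm (Fintype.card X) (Fintype.card X - m)) • h = 0 := by
  have hQ : IsQuandle op := ⟨hidem, hbij, hdist⟩
  have hA : IsAlmostQuasigroup op m := ⟨hstab, hsol⟩
  exact mAQ_le_three_torsion_annihilated_general hQ hA fun _ _ _ =>
    op_eq_self_of_le_three hQ hA hm3
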